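/- Let A_1, …, A_n, n ≥ 2, be subsets of ℝ⁺ with p̄(A_i) ∈ (0,1] for every i = 1, …, n. If the family {A_1, …, A_n} is coherently porous, then p̄(A_1 ∪ … ∪ A_n) = min{p̄(A_1), …, p̄(A_n)}. -/

import Mathlib

/-! The inequality `≤` is monotonicity: enlarging a set shrinks its gaps.

For `≥`, let `h` be a common maximising sequence and `p i` the porosity of `A i`. A gap `(a, b)`
of `A i` in `(0, h k)` of length about `p i * h k` must end close to `h k`, since otherwise
the ratio `(b - a) / b`, taken at the scale `b` instead of `h k`, would exceed `p i` (this is where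
`p i > 0` is used). So for every `ε > 0` and large `k`, the set `A i` misses the whole interval
`((1 - p i + ε) h k, (1 - ε) h k)`; this is `eventually_Ioo_inter_eq_empty`. All these intervals
contain the one belonging to the smallest `p i`, which is therefore a gap of the union, of relative
length `min p i - 2 ε`. -/

open Filter Set

/-- `gapLength E h` = λ(E,h): the length of the largest open subinterval of (0,h)
containing no point of `E` (0 if no such interval exists). -/
noncomputable def gapLength (E : Set ℝ) (h : ℝ) : ℝ :=
  sSup {l : ℝ | ∃ a b : ℝ, 0 ≤ a ∧ a ≤ b ∧ b ≤ h ∧ Set.Ioo a b ∩ E = ∅ ∧ l = b - a}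

/-- The right upper porosity of `E` at 0. -/
noncomputable def upperPorosity (E : Set ℝ) : ℝ :=
  Filter.limsup (fun h => gapLength E h / h) (nhdsWithin (0:ℝ) (Set.Ioi 0))

/-- The right lower porosity of `E` at 0. -/
noncomputable def lowerPorosity (E : Set ℝ) : ℝ :=
  Filter.liminf (fun h => gapLength E h / h) (nhdsWithin (0:ℝ) (Set.Ioi 0))

/-- `UMP E`: sequences of positive reals tending to 0 along which the upper limit
in the definition of porosity is attained. -/
def UMP (E : Set ℝ) : Set (ℕ → ℝ) :=
  {h | (∀ n, 0 < h n) ∧ Filter.Tendsto h Filter.atTop (nhds 0) ∧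
    Filter.Tendsto (fun n => gapLength E (h n) / h n) Filter.atTop (nhds (upperPorosity E))}

/-- The set of all strongly porous at 0 subsets of ℝ⁺. -/
def SP : Set (Set ℝ) := {E | E ⊆ Set.Ici 0 ∧ upperPorosity E = 1}

/-- `I` is an ideal on the set `X`. -/
def IsIdealOn (X : Set ℝ) (I : Set (Set ℝ)) : Prop :=
  I.Nonempty ∧ (∀ B ∈ I, B ⊆ X) ∧ (∀ B ∈ I, ∀ C : Set ℝ, C ⊆ B → C ∈ I) ∧
    (∀ B ∈ I, ∀ C ∈ I, B ∪ C ∈ I) ∧ X ∉ I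

/-- `I` is a `Γ`-maximal ideal on `X`. -/
def IsMaximalIdealIn (X : Set ℝ) (Γ I : Set (Set ℝ)) : Prop :=
  IsIdealOn X I ∧ I ⊆ Γ ∧ ∀ J : Set (Set ℝ), IsIdealOn X J → I ⊆ J → J ⊆ Γ → I = J

/-- `Î(SP)`: the intersection of all SP-maximal ideals on ℝ⁺. -/
def hatISP : Set (Set ℝ) :=
  {A | ∀ I : Set (Set ℝ), IsMaximalIdealIn (Set.Ici 0) SP I → A ∈ I}

/-- The q-blow up `E(q)` of a set `E ⊆ ℝ⁺`. -/
def blowUp (E : Set ℝ) (q : ℝ) : Set ℝ := ⋃ x ∈ E, Set.Ioo (q⁻¹ * x) (q * x)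

/-- The lengths of gaps in `(0, h)` are bounded by `h`, so the supremum in `gapLength` is genuine. -/
lemma bddAbove_gaps (E : Set ℝ) (h : ℝ) : BddAbove
    {l : ℝ | ∃ a b : ℝ, 0 ≤ a ∧ a ≤ b ∧ b ≤ h ∧ Set.Ioo a b ∩ E = ∅ ∧ l = b - a} := by
  refine ⟨h, ?_⟩
  rintro l ⟨a, b, ha, hab, hb, -, rfl⟩
  linarith

lemma nonempty_gaps (E : Set ℝ) {h : ℝ} (hh : 0 ≤ h) :
    {l : ℝ | ∃ a b : ℝ, 0 ≤ a ∧ a ≤ b ∧ b ≤ h ∧ Set.Ioo a b ∩ E = ∅ ∧ l = b - a}.Nonempty :=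
  ⟨0, 0, 0, le_rfl, le_rfl, hh, by simp, by simp⟩

lemma sub_le_gapLength {E : Set ℝ} {h a b : ℝ} (ha : 0 ≤ a) (hab : a ≤ b) (hb : b ≤ h)
    (hE : Set.Ioo a b ∩ E = ∅) : b - a ≤ gapLength E h :=
  le_csSup (bddAbove_gaps E h) ⟨a, b, ha, hab, hb, hE, rfl⟩

lemma gapLength_nonneg (E : Set ℝ) {h : ℝ} (hh : 0 ≤ h) : 0 ≤ gapLength E h := by
  simpa using sub_le_gapLength (E := E) (a := 0) (b := 0) le_rfl le_rfl hh (by simp)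

lemma gapLength_le (E : Set ℝ) {h : ℝ} (hh : 0 ≤ h) : gapLength E h ≤ h := by
  refine csSup_le (nonempty_gaps E hh) ?_
  rintro l ⟨a, b, ha, hab, hb, -, rfl⟩
  linarith

lemma gapLength_anti {E F : Set ℝ} (hEF : E ⊆ F) {h : ℝ} (hh : 0 ≤ h) :
    gapLength F h ≤ gapLength E h := by
  refine csSup_le (nonempty_gaps F hh) ?_
  rintro l ⟨a, b, ha, hab, hb, hF, rfl⟩
  refine sub_le_gapLength ha hab hb (Set.subset_empty_iff.1 ?_)
  rw [← hF]
  exact Set.inter_subset_inter_right _ hEF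

lemma isBoundedUnder_le_gapRatio (E : Set ℝ) :
    IsBoundedUnder (· ≤ ·) (nhdsWithin (0:ℝ) (Set.Ioi 0)) (fun h => gapLength E h / h) := by
  refine isBoundedUnder_of_eventually_le (a := 1) ?_
  filter_upwards [self_mem_nhdsWithin] with h hh
  exact div_le_one_of_le₀ (gapLength_le E (le_of_lt hh)) (le_of_lt hh)

lemma isBoundedUnder_ge_gapRatio (E : Set ℝ) :
    IsBoundedUnder (· ≥ ·) (nhdsWithin (0:ℝ) (Set.Ioi 0)) (fun h => gapLength E h / h) := by
  refine isBoundedUnder_of_eventually_ge (a := 0) ?_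
  filter_upwards [self_mem_nhdsWithin] with h hh
  exact div_nonneg (gapLength_nonneg E (le_of_lt hh)) (le_of_lt hh)

lemma upperPorosity_anti {E F : Set ℝ} (hEF : E ⊆ F) : upperPorosity F ≤ upperPorosity E := by
  refine limsup_le_limsup ?_ (isBoundedUnder_ge_gapRatio F).isCoboundedUnder_le
    (isBoundedUnder_le_gapRatio E)
  filter_upwards [self_mem_nhdsWithin] with h hh
  exact div_le_div_of_nonneg_right (gapLength_anti hEF (le_of_lt hh)) (le_of_lt hh)

/-- Along a maximising sequence, an almost maximal gap of a porous set in `(0, h k)` ends at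
`h k` up to a relative error tending to `0`. -/
lemma eventually_Ioo_inter_eq_empty {E : Set ℝ} (hp : upperPorosity E ∈ Set.Ioc (0:ℝ) 1)
    {h : ℕ → ℝ} (hh : h ∈ UMP E) {ε : ℝ} (hε : 0 < ε) :
    ∀ᶠ k in atTop,
      Set.Ioo ((1 - upperPorosity E + ε) * h k) ((1 - ε) * h k) ∩ E = ∅ := by
  obtain ⟨hpos, hlim, hmax⟩ := hh
  obtain ⟨hp0, hp1⟩ := hp
  set p := upperPorosity E with hpdef
  -- With error `δ` in both estimates of the ratio, `b / h k ≥ (p - δ) / (p + δ) ≥ 1 - 2 * δ / p`.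
  obtain ⟨δ, hδ⟩ : ∃ δ, δ = ε * p / 2 := ⟨_, rfl⟩
  have hδ0 : 0 < δ := by rw [hδ]; positivity
  have hδε : δ ≤ ε := by rw [hδ]; nlinarith
  have hup : ∀ᶠ x in nhdsWithin (0:ℝ) (Set.Ioi 0), gapLength E x / x < p + δ :=
    eventually_lt_of_limsup_lt (by rw [← upperPorosity, ← hpdef]; linarith)
      (isBoundedUnder_le_gapRatio E)
  rw [eventually_nhdsWithin_iff, Metric.eventually_nhds_iff] at hup
  obtain ⟨η, hη, hup⟩ := hup
  filter_upwards [hlim.eventually_lt_const hη,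
    hmax.eventually_const_lt (show p - δ < p by linarith)] with k hk1 hk2
  have hk0 := hpos k
  by_cases hε1 : 1 ≤ ε
  · rw [Set.Ioo_eq_empty, Set.empty_inter]
    rw [not_lt]
    gcongr
    linarith
  rw [lt_div_iff₀ hk0] at hk2
  obtain ⟨l, ⟨a, b, ha, hab, hb, hE, rfl⟩, hl⟩ := exists_lt_of_lt_csSup (nonempty_gaps E hk0.le) hk2
  have hδp : δ < p := by rw [hδ]; nlinarith
  have hb0 : 0 < b := by
    have : 0 < (p - δ) * h k := mul_pos (by linarith) hk0
    linarith
  have hgap := sub_le_gapLength ha hab le_rfl hE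
  have hupb := hup (y := b)
    (by rw [Real.dist_eq, sub_zero, abs_of_pos hb0]; linarith) hb0
  rw [div_lt_iff₀ hb0] at hupb
  have hbig : (1 - ε) * h k ≤ b := by
    have h1 : (p - δ) * h k < (p + δ) * b := by linarith
    have h2 : (p + δ) * ((1 - ε) * h k) ≤ (p - δ) * h k := by
      have h3 : (p + δ) * (1 - ε) ≤ p - δ := by
        have : ε * p = 2 * δ := by rw [hδ]; ring
        nlinarith [mul_pos hδ0 hε]
      calc (p + δ) * ((1 - ε) * h k) = (p + δ) * (1 - ε) * h k := by ring
        _ ≤ (p - δ) * h k := by gcongr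
    exact le_of_lt (lt_of_mul_lt_mul_left (h2.trans_lt h1) (by linarith))
  have hsmall : a ≤ (1 - p + ε) * h k := by nlinarith
  refine Set.subset_empty_iff.1 ?_
  rw [← hE]
  exact Set.inter_subset_inter_left _ (Set.Ioo_subset_Ioo hsmall hbig)

theorem stmt4 (n : ℕ) (hn : 2 ≤ n) (A : Fin n → Set ℝ)
    (hA : ∀ i, A i ⊆ Set.Ici 0)
    (hp : ∀ i, upperPorosity (A i) ∈ Set.Ioc (0:ℝ) 1)
    (hcoh : (⋂ i, UMP (A i)).Nonempty) :
    upperPorosity (⋃ i, A i) = ⨅ i, upperPorosity (A i) := by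
  have : Nonempty (Fin n) := ⟨⟨0, by omega⟩⟩
  apply le_antisymm
  · exact le_ciInf fun i => upperPorosity_anti (Set.subset_iUnion A i)
  obtain ⟨h, hh⟩ := hcoh
  rw [Set.mem_iInter] at hh
  obtain ⟨i₀, hi₀⟩ := exists_eq_ciInf_of_finite (f := fun i => upperPorosity (A i))
  have hle : ∀ i, upperPorosity (A i₀) ≤ upperPorosity (A i) := fun i =>
    hi₀.trans_le (ciInf_le (Set.finite_range _).bddBelow i)
  rw [← hi₀]
  have hp₀ := hp i₀
  set p := upperPorosity (A i₀)
  refine le_of_forall_lt_imp_le_of_dense fun c hc => ?_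
  -- `2 * ε ≤ p - c` gives the bound, and `2 * ε ≤ p` keeps the endpoints of the gap in order.
  obtain ⟨ε, hε0, hε1, hε2⟩ : ∃ ε, 0 < ε ∧ 2 * ε ≤ p ∧ 2 * ε ≤ p - c :=
    ⟨min p (p - c) / 2, half_pos (lt_min hp₀.1 (by linarith)),
      by linarith [min_le_left p (p - c)], by linarith [min_le_right p (p - c)]⟩
  have hpos := (hh i₀).1
  have htend : Tendsto h atTop (nhdsWithin (0:ℝ) (Set.Ioi 0)) :=
    tendsto_nhdsWithin_iff.2 ⟨(hh i₀).2.1, Eventually.of_forall hpos⟩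
  refine le_limsup_of_frequently_le (htend.frequently (Eventually.frequently ?_))
    (isBoundedUnder_le_gapRatio _)
  filter_upwards [eventually_all.2 fun i => eventually_Ioo_inter_eq_empty (hp i) (hh i) hε0]
    with k hk
  have hk0 := hpos k
  rw [le_div_iff₀ hk0]
  have hgap : (1 - ε) * h k - (1 - p + ε) * h k ≤ gapLength (⋃ i, A i) (h k) := by
    refine sub_le_gapLength (mul_nonneg (by linarith [hp₀.2]) hk0.le) (by gcongr; linarith)
      (by nlinarith) ?_
    rw [Set.inter_iUnion, Set.iUnion_eq_empty]
    intro i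
    refine Set.subset_empty_iff.1 ?_
    rw [← hk i]
    refine Set.inter_subset_inter_left _ (Set.Ioo_subset_Ioo_left ?_)
    gcongr
    exact hle i
  nlinarith
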